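/- In the setting of Theorem 8, suppose additionally that |d(x)| ≤ δ(x) for all x ∈ ℝⁿ, where δ : ℝⁿ → ℝ₊ is a known continuous function with δ(x)/|x| → 0 as |x| → 0, and that Q(0) = 0 with |Q(x)|/|x| → 0 as |x| → 0. Let 𝒲 := {x : ℓ(x) + g(x, δ(x)) < 0}. Then the origin is an asymptotically stable equilibrium of the closed-loop system x⁺ = Ψ x + Ξ Q(x) + E d(x), and every sublevel set ℛ_γ := {x : V(x) ≤ γ} contained in 𝒲 ∪ {0} is positively invariant, with every solution starting in ℛ_γ converging to 0. (Theorem 9: asymptotic stability under state-dependent disturbance bounds.) -/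

import Mathlib

open Matrix Filter Topology

noncomputable def euclNorm {ι : Type*} [Fintype ι] (v : ι → ℝ) : ℝ :=
  Real.sqrt (∑ i, v i ^ 2)

noncomputable def spec2Norm {ι κ : Type*} [Fintype ι] [Fintype κ]
    (M : Matrix ι κ ℝ) : ℝ :=
  sSup ((fun v => euclNorm (M *ᵥ v)) '' {v | euclNorm v ≤ 1})

def LoewnerLE {ι : Type*} [Fintype ι] (X Y : Matrix ι ι ℝ) : Prop :=
  (Y - X).PosSemidef

def NegDef {ι : Type*} [Fintype ι] (M : Matrix ι ι ℝ) : Prop :=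
  (-M).PosDef

/-- The data-based bound `ℓ(x)` of inequality (34). -/
noncomputable def ellFun {n s s' p T : ℕ}
    (X₁ : Matrix (Fin n) (Fin T) ℝ) (E : Matrix (Fin n) (Fin s) ℝ)
    (Δ : Matrix (Fin s) (Fin s') ℝ) (P₁ Ω : Matrix (Fin n) (Fin n) ℝ)
    (G₁ : Matrix (Fin T) (Fin n) ℝ) (G₂ : Matrix (Fin T) (Fin p) ℝ)
    (Q : (Fin n → ℝ) → Fin p → ℝ) (x : Fin n → ℝ) : ℝ :=
  - (x ⬝ᵥ ((P₁⁻¹ * Ω * P₁⁻¹) *ᵥ x))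
  + (((2:ℝ) • ((X₁ * G₁) *ᵥ x) + (X₁ * G₂) *ᵥ Q x) ⬝ᵥ (P₁⁻¹ *ᵥ ((X₁ * G₂) *ᵥ Q x)))
  + spec2Norm Δ
      * euclNorm (((2:ℝ) • ((X₁ * G₁) *ᵥ x) + (X₁ * G₂) *ᵥ Q x) ᵥ* (P₁⁻¹ * E))
      * euclNorm (G₂ *ᵥ Q x)
  + spec2Norm Δ * euclNorm ((2:ℝ) • (G₁ *ᵥ x) + G₂ *ᵥ Q x)
      * euclNorm ((Eᵀ * P₁⁻¹ * X₁ * G₂) *ᵥ Q x)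
  + spec2Norm Δ ^ 2 * spec2Norm (Eᵀ * P₁⁻¹ * E)
      * euclNorm ((2:ℝ) • (G₁ *ᵥ x) + G₂ *ᵥ Q x) * euclNorm (G₂ *ᵥ Q x)

/-- The disturbance term `g(x, δ) = r₁(x)δ + r₂(x)δ + r₃δ²` of (35)-(36). -/
noncomputable def gFun {n s s' p T : ℕ}
    (X₁ : Matrix (Fin n) (Fin T) ℝ) (E : Matrix (Fin n) (Fin s) ℝ)
    (Δ : Matrix (Fin s) (Fin s') ℝ) (P₁ : Matrix (Fin n) (Fin n) ℝ)
    (G₁ : Matrix (Fin T) (Fin n) ℝ) (G₂ : Matrix (Fin T) (Fin p) ℝ)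
    (Q : (Fin n → ℝ) → Fin p → ℝ) (δ : ℝ) (x : Fin n → ℝ) : ℝ :=
  2 * euclNorm (((X₁ * G₁) *ᵥ x + (X₁ * G₂) *ᵥ Q x) ᵥ* (P₁⁻¹ * E)) * δ
  + 2 * spec2Norm Δ * spec2Norm (Eᵀ * P₁⁻¹ * E)
      * euclNorm (G₁ *ᵥ x + G₂ *ᵥ Q x) * δ
  + spec2Norm (Eᵀ * P₁⁻¹ * E) * δ ^ 2

/-!
Expanding `V(Ψx + ΞQ(x) + Ed(x))` and bounding every occurrence of the unknown `D₀` and `d(x)` by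
Cauchy–Schwarz gives `V(x⁺) ≤ V(x) - c|x|² + ℓ(x) + g(x, δ(x))`, where `c > 0` is the slack in the
strict Lyapunov inequality after conjugation with `P₁⁻¹`. This slack makes `V` contract by a fixed
factor `ρ < 1` wherever `ℓ + g ≤ 0`, and also near the origin, because `ℓ + g` is the nonpositive
quadratic term of `ℓ` plus `o(|x|²)`. The sublevel sets of `V` form a neighbourhood basis of `0`, so
contraction on one of them yields its invariance and geometric convergence to `0`.
-/

section EuclideanNorm

open scoped Matrix.Norms.L2Operator

variable {ι κ : Type*} [Fintype ι] [Fintype κ]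

lemma euclNorm_eq_norm_toLp (v : ι → ℝ) : euclNorm v = ‖WithLp.toLp 2 v‖ := by
  simp [euclNorm, EuclideanSpace.norm_eq]

@[simp]
lemma euclNorm_zero : euclNorm (0 : ι → ℝ) = 0 := by simp [euclNorm]

lemma euclNorm_nonneg (v : ι → ℝ) : 0 ≤ euclNorm v := Real.sqrt_nonneg _

lemma euclNorm_sq (v : ι → ℝ) : euclNorm v ^ 2 = v ⬝ᵥ v := by
  rw [euclNorm, Real.sq_sqrt (Finset.sum_nonneg fun i _ => sq_nonneg (v i))]
  simp only [dotProduct, sq]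

lemma euclNorm_eq_zero {v : ι → ℝ} : euclNorm v = 0 ↔ v = 0 := by
  simp [euclNorm_eq_norm_toLp]

lemma euclNorm_neg (v : ι → ℝ) : euclNorm (-v) = euclNorm v := by
  simp [euclNorm]

lemma euclNorm_smul (c : ℝ) (v : ι → ℝ) : euclNorm (c • v) = |c| * euclNorm v := by
  simp only [euclNorm_eq_norm_toLp, WithLp.toLp_smul, norm_smul, Real.norm_eq_abs]

lemma euclNorm_sub_le (v w : ι → ℝ) : euclNorm (v - w) ≤ euclNorm v + euclNorm w := by
  simpa only [euclNorm_eq_norm_toLp, WithLp.toLp_sub] using norm_sub_le _ _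

lemma dotProduct_le_euclNorm_mul (v w : ι → ℝ) : v ⬝ᵥ w ≤ euclNorm v * euclNorm w := by
  simpa only [euclNorm_eq_norm_toLp, EuclideanSpace.inner_toLp_toLp, star_trivial,
    dotProduct_comm] using real_inner_le_norm (WithLp.toLp 2 v) (WithLp.toLp 2 w)

lemma spec2Norm_eq_l2_opNorm [DecidableEq κ] (M : Matrix ι κ ℝ) : spec2Norm M = ‖M‖ := by
  rw [l2_opNorm_def, ← ContinuousLinearMap.sSup_unitClosedBall_eq_norm, spec2Norm]
  congr 1
  ext r
  constructor
  · rintro ⟨v, hv, rfl⟩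
    exact ⟨WithLp.toLp 2 v, by simpa [euclNorm_eq_norm_toLp] using hv,
      (euclNorm_eq_norm_toLp _).symm⟩
  · rintro ⟨v, hv, rfl⟩
    exact ⟨v.ofLp, by simpa [euclNorm_eq_norm_toLp] using hv, euclNorm_eq_norm_toLp _⟩

lemma spec2Norm_nonneg (M : Matrix ι κ ℝ) : 0 ≤ spec2Norm M := by
  classical exact spec2Norm_eq_l2_opNorm M ▸ norm_nonneg M

lemma euclNorm_mulVec_le (M : Matrix ι κ ℝ) (v : κ → ℝ) :
    euclNorm (M *ᵥ v) ≤ spec2Norm M * euclNorm v := by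
  classical
  rw [spec2Norm_eq_l2_opNorm, euclNorm_eq_norm_toLp, euclNorm_eq_norm_toLp]
  exact l2_opNorm_mulVec M (WithLp.toLp 2 v)

lemma euclNorm_mulVec_le_of_spec2Norm_le {M : Matrix ι κ ℝ} {r : ℝ} (hM : spec2Norm M ≤ r)
    (v : κ → ℝ) : euclNorm (M *ᵥ v) ≤ r * euclNorm v :=
  (euclNorm_mulVec_le M v).trans (mul_le_mul_of_nonneg_right hM (euclNorm_nonneg v))

lemma nhds_zero_basis_euclNorm :
    (𝓝 (0 : ι → ℝ)).HasBasis (0 < ·) fun ε => {v | euclNorm v ≤ ε} := by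
  have hind : IsInducing (WithLp.toLp 2 : (ι → ℝ) → EuclideanSpace ℝ ι) :=
    (PiLp.homeomorph 2 fun _ : ι => ℝ).symm.isInducing
  refine (hind.basis_nhds Metric.nhds_basis_closedBall).congr (fun _ => Iff.rfl) fun ε _ => ?_
  ext v
  simp [euclNorm_eq_norm_toLp]

end EuclideanNorm

section QuadraticForm

open scoped MatrixOrder

variable {ι κ ν μ : Type*} [Fintype ι] [Fintype κ] [Fintype ν] [Fintype μ]

/-- The quadratic form `x ↦ xᵀ M x` of a square matrix on plain coordinate vectors; the Lyapunov
function `V` is the one of `P₁⁻¹`. -/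
def quadForm (M : Matrix ι ι ℝ) (x : ι → ℝ) : ℝ := x ⬝ᵥ M *ᵥ x

@[simp]
lemma quadForm_zero (M : Matrix ι ι ℝ) : quadForm M 0 = 0 := by simp [quadForm]

lemma continuous_quadForm (M : Matrix ι ι ℝ) : Continuous (quadForm M) := by
  unfold quadForm
  fun_prop

lemma quadForm_mulVec (M : Matrix ι ι ℝ) (A : Matrix ι κ ℝ) (x : κ → ℝ) :
    quadForm M (A *ᵥ x) = quadForm (Aᵀ * M * A) x := by
  simp only [quadForm, dotProduct_mulVec, ← vecMul_vecMul, vecMul_transpose]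

lemma quadForm_add_right {M : Matrix ι ι ℝ} (hM : M.IsSymm) (v w : ι → ℝ) :
    quadForm M (v + w) = quadForm M v + ((2 : ℝ) • v + w) ⬝ᵥ M *ᵥ w := by
  have hcomm : w ⬝ᵥ M *ᵥ v = v ⬝ᵥ M *ᵥ w := by
    rw [dotProduct_comm, ← vecMul_transpose, hM.eq, dotProduct_mulVec]
  simp only [quadForm, mulVec_add, add_dotProduct, dotProduct_add, smul_dotProduct, smul_eq_mul]
  linarith

lemma quadForm_le_spec2Norm_mul (M : Matrix ι ι ℝ) (x : ι → ℝ) :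
    quadForm M x ≤ spec2Norm M * euclNorm x ^ 2 :=
  calc quadForm M x ≤ euclNorm x * euclNorm (M *ᵥ x) := dotProduct_le_euclNorm_mul _ _
    _ ≤ euclNorm x * (spec2Norm M * euclNorm x) :=
      mul_le_mul_of_nonneg_left (euclNorm_mulVec_le M x) (euclNorm_nonneg x)
    _ = spec2Norm M * euclNorm x ^ 2 := by ring

lemma quadForm_nonneg {M : Matrix ι ι ℝ} (hM : M.PosSemidef) (x : ι → ℝ) : 0 ≤ quadForm M x := by
  simpa [quadForm] using hM.dotProduct_mulVec_nonneg x

lemma exists_pos_mul_sq_le_quadForm {M : Matrix ι ι ℝ} (hM : M.PosDef) :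
    ∃ c > 0, ∀ x, c * euclNorm x ^ 2 ≤ quadForm M x := by
  classical
  cases isEmpty_or_nonempty ι
  · exact ⟨1, one_pos, fun x => by simp [Subsingleton.elim x 0]⟩
  obtain ⟨c, hc, hcM⟩ := (CFC.exists_pos_algebraMap_le_iff hM.isHermitian).2
    fun _ hr => hM.isStrictlyPositive.spectrum_pos hr
  refine ⟨c, hc, fun x => ?_⟩
  have h := quadForm_nonneg (Matrix.le_iff.1 hcM) x
  rw [quadForm, sub_mulVec, dotProduct_sub, Algebra.algebraMap_eq_smul_one, smul_mulVec,
    one_mulVec, dotProduct_smul, smul_eq_mul, ← euclNorm_sq] at h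
  exact sub_nonneg.1 h

lemma nhds_zero_basis_quadForm {M : Matrix ι ι ℝ} (hM : M.PosDef) :
    (𝓝 (0 : ι → ℝ)).HasBasis (0 < ·) fun γ => {x | quadForm M x ≤ γ} := by
  obtain ⟨c, hc, hle⟩ := exists_pos_mul_sq_le_quadForm hM
  refine nhds_zero_basis_euclNorm.to_hasBasis' (fun ε hε => ?_) fun γ hγ => ?_
  · refine ⟨c * ε ^ 2, by positivity, fun x hx => ?_⟩
    exact le_of_sq_le_sq (le_of_mul_le_mul_left ((hle x).trans hx) hc) hε.le
  · exact (continuous_quadForm M).tendsto' 0 0 (quadForm_zero M) |>.eventually_le_const hγ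

lemma exists_quadForm_contraction_factor (M : Matrix ι ι ℝ) {c : ℝ} (hc : 0 < c) :
    ∃ ρ, 0 ≤ ρ ∧ ρ < 1 ∧ ∀ x y, quadForm M y + c * euclNorm x ^ 2 ≤ quadForm M x →
      quadForm M y ≤ ρ * quadForm M x := by
  have hK := spec2Norm_nonneg M
  refine ⟨spec2Norm M / (spec2Norm M + c), by positivity, ?_, fun x y h => ?_⟩
  · rw [div_lt_one (by positivity)]
    linarith
  · rw [div_mul_eq_mul_div, le_div_iff₀ (by positivity)]
    have hx := quadForm_le_spec2Norm_mul M x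
    calc quadForm M y * (spec2Norm M + c)
        ≤ (quadForm M x - c * euclNorm x ^ 2) * (spec2Norm M + c) := by
          gcongr
          linarith
      _ = spec2Norm M * quadForm M x + c * (quadForm M x - spec2Norm M * euclNorm x ^ 2)
          - (c * euclNorm x) ^ 2 := by ring
      _ ≤ spec2Norm M * quadForm M x := by
          linarith [sq_nonneg (c * euclNorm x),
            mul_nonpos_of_nonneg_of_nonpos hc.le (sub_nonpos.2 hx)]

lemma sub_mul_mul_mulVec {α : Type*} (A : Matrix α κ ℝ) (F : Matrix α ν ℝ) (D : Matrix ν κ ℝ)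
    (G : Matrix κ μ ℝ) (y : μ → ℝ) :
    ((A - F * D) * G) *ᵥ y = (A * G) *ᵥ y - F *ᵥ D *ᵥ G *ᵥ y := by
  simp only [Matrix.sub_mul, sub_mulVec, mulVec_mulVec, Matrix.mul_assoc]

lemma perturbed_dotProduct_mulVec_le (R : Matrix ι ν ℝ) (F : Matrix ι κ ℝ) (H : Matrix ν μ ℝ)
    (v : ι → ℝ) (w : ν → ℝ) {k : κ → ℝ} {m : μ → ℝ} {a b : ℝ}
    (hk : euclNorm k ≤ a) (hm : euclNorm m ≤ b) :
    (v + F *ᵥ k) ⬝ᵥ R *ᵥ (w + H *ᵥ m) ≤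
      v ⬝ᵥ R *ᵥ w + euclNorm (v ᵥ* (R * H)) * b + a * euclNorm ((Fᵀ * R) *ᵥ w)
        + spec2Norm (Fᵀ * R * H) * a * b := by
  have ha : 0 ≤ a := (euclNorm_nonneg k).trans hk
  have hexpand : (v + F *ᵥ k) ⬝ᵥ R *ᵥ (w + H *ᵥ m) =
      v ⬝ᵥ R *ᵥ w + (v ᵥ* (R * H)) ⬝ᵥ m + k ⬝ᵥ (Fᵀ * R) *ᵥ w + k ⬝ᵥ (Fᵀ * R * H) *ᵥ m := by
    simp only [mulVec_add, dotProduct_add, dotProduct_mulVec, add_vecMul, add_dotProduct,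
      ← vecMul_vecMul, vecMul_transpose]
    ring
  have hvm : (v ᵥ* (R * H)) ⬝ᵥ m ≤ euclNorm (v ᵥ* (R * H)) * b :=
    (dotProduct_le_euclNorm_mul _ _).trans (mul_le_mul_of_nonneg_left hm (euclNorm_nonneg _))
  have hkw : k ⬝ᵥ (Fᵀ * R) *ᵥ w ≤ a * euclNorm ((Fᵀ * R) *ᵥ w) :=
    (dotProduct_le_euclNorm_mul _ _).trans (mul_le_mul_of_nonneg_right hk (euclNorm_nonneg _))
  have hkm : k ⬝ᵥ (Fᵀ * R * H) *ᵥ m ≤ spec2Norm (Fᵀ * R * H) * a * b :=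
    calc k ⬝ᵥ (Fᵀ * R * H) *ᵥ m
        ≤ euclNorm k * euclNorm ((Fᵀ * R * H) *ᵥ m) := dotProduct_le_euclNorm_mul _ _
      _ ≤ a * (spec2Norm (Fᵀ * R * H) * euclNorm m) :=
        mul_le_mul hk (euclNorm_mulVec_le _ m) (euclNorm_nonneg _) ha
      _ ≤ a * (spec2Norm (Fᵀ * R * H) * b) := by
        have := spec2Norm_nonneg (Fᵀ * R * H)
        gcongr
      _ = spec2Norm (Fᵀ * R * H) * a * b := by ring
  linarith

end QuadraticForm

section SublevelContraction

variable {X : Type*} {l : Filter X} {f : X → X} {V : X → ℝ} {ρ γ : ℝ}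

lemma eq_iterate_of_forall_succ {x : ℕ → X} (hx : ∀ t, x (t + 1) = f (x t)) (t : ℕ) :
    x t = f^[t] (x 0) := by
  induction t with
  | zero => rfl
  | succ t ih => rw [hx, ih, Function.iterate_succ_apply']

lemma mapsTo_sublevel_of_contraction (hV : ∀ y, 0 ≤ V y) (hρ : ρ ≤ 1)
    (h : ∀ y, V y ≤ γ → V (f y) ≤ ρ * V y) : Set.MapsTo f {y | V y ≤ γ} {y | V y ≤ γ} :=
  fun y hy => (h y hy).trans ((mul_le_of_le_one_left (hV y) hρ).trans hy)

lemma iterate_le_pow_mul_of_contraction (hV : ∀ y, 0 ≤ V y) (hρ₀ : 0 ≤ ρ) (hρ₁ : ρ ≤ 1)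
    (h : ∀ y, V y ≤ γ → V (f y) ≤ ρ * V y) {y : X} (hy : V y ≤ γ) (t : ℕ) :
    V (f^[t] y) ≤ ρ ^ t * V y := by
  induction t with
  | zero => simp
  | succ t ih =>
    rw [Function.iterate_succ_apply', pow_succ', mul_assoc]
    exact (h _ ((mapsTo_sublevel_of_contraction hV hρ₁ h).iterate t hy)).trans
      (mul_le_mul_of_nonneg_left ih hρ₀)

lemma tendsto_iterate_of_contraction (hl : l.HasBasis (0 < ·) fun γ => {y | V y ≤ γ})
    (hV : ∀ y, 0 ≤ V y) (hρ₀ : 0 ≤ ρ) (hρ₁ : ρ < 1) (h : ∀ y, V y ≤ γ → V (f y) ≤ ρ * V y)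
    {y : X} (hy : V y ≤ γ) : Tendsto (fun t => f^[t] y) atTop l := by
  refine hl.tendsto_right_iff.2 fun ε hε => ?_
  have hgeom : Tendsto (fun t => ρ ^ t * V y) atTop (𝓝 0) := by
    simpa using (tendsto_pow_atTop_nhds_zero_of_lt_one hρ₀ hρ₁).mul_const (V y)
  filter_upwards [hgeom.eventually_le_const hε] with t ht
  exact (iterate_le_pow_mul_of_contraction hV hρ₀ hρ₁.le h hy t).trans ht

lemma eventually_iterate_mem_and_tendsto_of_contraction
    (hl : l.HasBasis (0 < ·) fun γ => {y | V y ≤ γ}) (hV : ∀ y, 0 ≤ V y) (hρ₀ : 0 ≤ ρ)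
    (hρ₁ : ρ < 1) (h : ∀ᶠ y in l, V (f y) ≤ ρ * V y) {U : Set X} (hU : U ∈ l) :
    ∀ᶠ y in l, (∀ t, f^[t] y ∈ U) ∧ Tendsto (fun t => f^[t] y) atTop l := by
  obtain ⟨γ, hγ, hsub⟩ := hl.mem_iff.1 (inter_mem hU h)
  have hdec : ∀ y, V y ≤ γ → V (f y) ≤ ρ * V y := fun y hy => (hsub hy).2
  filter_upwards [hl.mem_of_mem hγ] with y hy
  exact ⟨fun t => (hsub ((mapsTo_sublevel_of_contraction hV hρ₁.le hdec).iterate t hy)).1,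
    tendsto_iterate_of_contraction hl hV hρ₀ hρ₁ hdec hy⟩

end SublevelContraction

section Asymptotics

open Asymptotics

variable {α ι κ : Type*} [Fintype ι] [Fintype κ] {l : Filter α} {g : α → ℝ}

lemma isTheta_euclNorm (u : α → ι → ℝ) : (fun x => euclNorm (u x)) =Θ[l] u := by
  let e := (PiLp.continuousLinearEquiv 2 ℝ fun _ : ι => ℝ).symm
  have he : (fun x => e (u x)) =Θ[l] u := ⟨e.isBigO_comp u l, e.isBigO_comp_rev u l⟩
  simp only [euclNorm_eq_norm_toLp]
  exact he.norm_left

lemma isBigO_mulVec (M : Matrix ι κ ℝ) (u : α → κ → ℝ) : (fun x => M *ᵥ u x) =O[l] u :=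
  (LinearMap.toContinuousLinearMap M.mulVecLin).isBigO_comp u l

lemma isBigO_vecMul (M : Matrix ι κ ℝ) (u : α → ι → ℝ) : (fun x => u x ᵥ* M) =O[l] u := by
  simpa only [mulVec_transpose] using isBigO_mulVec Mᵀ u

lemma isBigO_euclNorm {u : α → ι → ℝ} (hu : u =O[l] g) : (fun x => euclNorm (u x)) =O[l] g :=
  (isTheta_euclNorm u).isBigO.trans hu

lemma isLittleO_euclNorm {u : α → ι → ℝ} (hu : u =o[l] g) : (fun x => euclNorm (u x)) =o[l] g :=
  (isTheta_euclNorm u).trans_isLittleO hu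

lemma isLittleO_sq_of_isBigO_mul_isLittleO {u v : α → ℝ} (c : ℝ) (hu : u =O[l] g)
    (hv : v =o[l] g) : (fun x => c * u x * v x) =o[l] fun x => g x ^ 2 := by
  simpa only [sq] using (hu.const_mul_left c).mul_isLittleO hv

lemma isBigO_dotProduct (u v : α → ι → ℝ) :
    (fun x => u x ⬝ᵥ v x) =O[l] fun x => euclNorm (u x) * euclNorm (v x) := by
  refine IsBigO.of_norm_le fun x => abs_le.2 ⟨?_, dotProduct_le_euclNorm_mul _ _⟩
  rw [neg_le, ← neg_dotProduct, ← euclNorm_neg (u x)]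
  exact dotProduct_le_euclNorm_mul _ _

lemma isLittleO_dotProduct {u v : α → ι → ℝ} (hu : u =O[l] g) (hv : v =o[l] g) :
    (fun x => u x ⬝ᵥ v x) =o[l] fun x => g x ^ 2 :=
  (isBigO_dotProduct u v).trans_isLittleO <| by
    simpa only [one_mul] using
      isLittleO_sq_of_isBigO_mul_isLittleO 1 (isBigO_euclNorm hu) (isLittleO_euclNorm hv)

lemma isBigO_mulVec_add_mulVec {μ : Type*} [Fintype μ] {l : Filter (ι → ℝ)}
    {Q : (ι → ℝ) → κ → ℝ} (hQ : Q =O[l] euclNorm) (M : Matrix μ ι ℝ) (N : Matrix μ κ ℝ) :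
    (fun x => M *ᵥ x + N *ᵥ Q x) =O[l] euclNorm :=
  ((isBigO_mulVec M id).trans (isTheta_euclNorm id).isBigO_symm).add ((isBigO_mulVec N Q).trans hQ)

lemma isLittleO_euclNorm_of_tendsto_div {f : (ι → ℝ) → ℝ}
    (hf : Tendsto (fun x => f x / euclNorm x) (𝓝[≠] 0) (𝓝 0)) : f =o[𝓝[≠] 0] euclNorm :=
  isLittleO_of_tendsto' (eventually_mem_nhdsWithin.mono fun _ hx h₀ =>
    absurd (euclNorm_eq_zero.1 h₀) hx) hf

lemma tendsto_euclNorm_zero : Tendsto (euclNorm : (ι → ℝ) → ℝ) (𝓝 0) (𝓝 0) :=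
  (isTheta_euclNorm id).isBigO.trans_tendsto tendsto_id

lemma eq_zero_of_isBigO_of_tendsto_zero {X : Type*} [TopologicalSpace X] {a : X}
    [(𝓝[≠] a).NeBot] {f g : X → ℝ} (hf : ContinuousAt f a) (hfg : f =O[𝓝[≠] a] g)
    (hg : Tendsto g (𝓝[≠] a) (𝓝 0)) : f a = 0 :=
  tendsto_nhds_unique (hf.mono_left nhdsWithin_le_nhds) (hfg.trans_tendsto hg)

end Asymptotics

section LyapunovInequality

variable {ι κ : Type*} [Fintype ι] [DecidableEq ι] [Fintype κ]

lemma posDef_inv_mul_mul_inv {P M : Matrix ι ι ℝ} (hP : P.PosDef) (hM : M.PosDef) :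
    (P⁻¹ * M * P⁻¹).PosDef := by
  simpa only [hP.inv.isHermitian.eq] using
    hM.conjTranspose_mul_mul_same (mulVec_injective_of_isUnit hP.inv.isUnit)

lemma posSemidef_inv_mul_mul_inv {P M : Matrix ι ι ℝ} (hP : P.PosDef) (hM : M.PosSemidef) :
    (P⁻¹ * M * P⁻¹).PosSemidef := by
  simpa only [hP.inv.isHermitian.eq] using hM.conjTranspose_mul_mul_same P⁻¹

lemma exists_quadForm_decrease_of_negDef {P Ω : Matrix ι ι ℝ} {A : Matrix ι κ ℝ}
    {Y : Matrix κ ι ℝ} (hP : P.PosDef)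
    (h : NegDef (Yᵀ * Aᵀ * P⁻¹ * (A * Y) - P + Ω)) :
    ∃ c > 0, ∀ x, quadForm P⁻¹ ((A * (Y * P⁻¹)) *ᵥ x) + quadForm (P⁻¹ * Ω * P⁻¹) x
      + c * euclNorm x ^ 2 ≤ quadForm P⁻¹ x := by
  have hsymm : P⁻¹ᵀ = P⁻¹ := isHermitian_iff_isSymm.1 hP.inv.isHermitian
  have hinv : P⁻¹ * P = 1 := nonsing_inv_mul _ ((isUnit_iff_isUnit_det _).1 hP.isUnit)
  have hconj : P⁻¹ * -(Yᵀ * Aᵀ * P⁻¹ * (A * Y) - P + Ω) * P⁻¹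
      = P⁻¹ - (A * (Y * P⁻¹))ᵀ * P⁻¹ * (A * (Y * P⁻¹)) - P⁻¹ * Ω * P⁻¹ := by
    simp only [transpose_mul, hsymm, Matrix.mul_neg, Matrix.neg_mul, Matrix.mul_add,
      Matrix.add_mul, Matrix.mul_sub, Matrix.sub_mul, hinv, Matrix.one_mul, Matrix.mul_assoc]
    abel
  obtain ⟨c, hc, hle⟩ := exists_pos_mul_sq_le_quadForm (hconj ▸ posDef_inv_mul_mul_inv hP h)
  refine ⟨c, hc, fun x => ?_⟩
  have hx := hle x
  simp only [quadForm_mulVec]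
  simp only [quadForm, sub_mulVec, dotProduct_sub] at hx ⊢
  linarith

end LyapunovInequality

section ClosedLoop

open Asymptotics

variable {n p s s' T : ℕ} {X₁ : Matrix (Fin n) (Fin T) ℝ} {E : Matrix (Fin n) (Fin s) ℝ}
  {D₀ : Matrix (Fin s) (Fin T) ℝ} {Δ : Matrix (Fin s) (Fin s') ℝ}
  {P₁ Ω : Matrix (Fin n) (Fin n) ℝ} {G₁ : Matrix (Fin T) (Fin n) ℝ}
  {G₂ : Matrix (Fin T) (Fin p) ℝ} {Q : (Fin n → ℝ) → Fin p → ℝ}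
  {d : (Fin n → ℝ) → Fin s → ℝ} {δ : (Fin n → ℝ) → ℝ}

/-- The closed-loop map `x ↦ Ψ x + Ξ Q(x) + E d(x)`, with `Ψ = (X₁ - E D₀) G₁` and
`Ξ = (X₁ - E D₀) G₂` written out in terms of the data. -/
def closedLoop (X₁ : Matrix (Fin n) (Fin T) ℝ) (E : Matrix (Fin n) (Fin s) ℝ)
    (D₀ : Matrix (Fin s) (Fin T) ℝ) (G₁ : Matrix (Fin T) (Fin n) ℝ)
    (G₂ : Matrix (Fin T) (Fin p) ℝ) (Q : (Fin n → ℝ) → Fin p → ℝ)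
    (d : (Fin n → ℝ) → Fin s → ℝ) (x : Fin n → ℝ) : Fin n → ℝ :=
  ((X₁ - E * D₀) * G₁) *ᵥ x + ((X₁ - E * D₀) * G₂) *ᵥ Q x + E *ᵥ d x

lemma nonlinear_crossTerm_le (hD₀ : spec2Norm D₀ ≤ spec2Norm Δ) (x : Fin n → ℝ) :
    ((2 : ℝ) • (((X₁ - E * D₀) * G₁) *ᵥ x) + ((X₁ - E * D₀) * G₂) *ᵥ Q x) ⬝ᵥ
        P₁⁻¹ *ᵥ (((X₁ - E * D₀) * G₂) *ᵥ Q x)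
      ≤ ellFun X₁ E Δ P₁ Ω G₁ G₂ Q x + quadForm (P₁⁻¹ * Ω * P₁⁻¹) x := by
  have hbound (v : Fin T → ℝ) : euclNorm (-(D₀ *ᵥ v)) ≤ spec2Norm Δ * euclNorm v :=
    (euclNorm_neg _).trans_le (euclNorm_mulVec_le_of_spec2Norm_le hD₀ v)
  have hleft : (2 : ℝ) • (((X₁ - E * D₀) * G₁) *ᵥ x) + ((X₁ - E * D₀) * G₂) *ᵥ Q x
      = ((2 : ℝ) • ((X₁ * G₁) *ᵥ x) + (X₁ * G₂) *ᵥ Q x)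
        + E *ᵥ -(D₀ *ᵥ ((2 : ℝ) • (G₁ *ᵥ x) + G₂ *ᵥ Q x)) := by
    simp only [sub_mul_mul_mulVec, mulVec_neg, mulVec_add, mulVec_smul]
    module
  have hright : ((X₁ - E * D₀) * G₂) *ᵥ Q x = (X₁ * G₂) *ᵥ Q x + E *ᵥ -(D₀ *ᵥ G₂ *ᵥ Q x) := by
    rw [sub_mul_mul_mulVec, mulVec_neg, sub_eq_add_neg]
  have hassoc : (Eᵀ * P₁⁻¹ * X₁ * G₂) *ᵥ Q x = (Eᵀ * P₁⁻¹) *ᵥ (X₁ * G₂) *ᵥ Q x := by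
    rw [mulVec_mulVec, Matrix.mul_assoc _ X₁]
  rw [hleft, hright]
  refine (perturbed_dotProduct_mulVec_le _ _ _ _ _ (hbound _) (hbound _)).trans_eq ?_
  simp only [ellFun, quadForm, hassoc]
  ring

lemma disturbance_crossTerm_le (hD₀ : spec2Norm D₀ ≤ spec2Norm Δ) {b : ℝ} {e : Fin s → ℝ}
    (he : euclNorm e ≤ b) (x : Fin n → ℝ) :
    ((2 : ℝ) • (((X₁ - E * D₀) * G₁) *ᵥ x + ((X₁ - E * D₀) * G₂) *ᵥ Q x) + E *ᵥ e) ⬝ᵥ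
        P₁⁻¹ *ᵥ (E *ᵥ e)
      ≤ gFun X₁ E Δ P₁ G₁ G₂ Q b x := by
  set y := G₁ *ᵥ x + G₂ *ᵥ Q x with hy
  have hbound : euclNorm (e - (2 : ℝ) • (D₀ *ᵥ y)) ≤ b + 2 * (spec2Norm Δ * euclNorm y) := by
    refine (euclNorm_sub_le _ _).trans (add_le_add he ?_)
    rw [euclNorm_smul, abs_two]
    exact mul_le_mul_of_nonneg_left (euclNorm_mulVec_le_of_spec2Norm_le hD₀ y) zero_le_two
  have hleft : (2 : ℝ) • (((X₁ - E * D₀) * G₁) *ᵥ x + ((X₁ - E * D₀) * G₂) *ᵥ Q x) + E *ᵥ e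
      = (2 : ℝ) • ((X₁ * G₁) *ᵥ x + (X₁ * G₂) *ᵥ Q x) + E *ᵥ (e - (2 : ℝ) • (D₀ *ᵥ y)) := by
    simp only [hy, sub_mul_mul_mulVec, mulVec_sub, mulVec_add, mulVec_smul]
    module
  have h := perturbed_dotProduct_mulVec_le P₁⁻¹ E E
    ((2 : ℝ) • ((X₁ * G₁) *ᵥ x + (X₁ * G₂) *ᵥ Q x)) 0 hbound he
  rw [hleft, ← zero_add (E *ᵥ e)]
  refine h.trans_eq ?_
  simp only [gFun, hy, mulVec_zero, dotProduct_zero, smul_vecMul, euclNorm_smul, abs_two,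
    euclNorm_zero]
  ring

lemma quadForm_closedLoop_le (hP₁ : P₁.PosDef) (hD₀ : spec2Norm D₀ ≤ spec2Norm Δ)
    {x : Fin n → ℝ} (hd : euclNorm (d x) ≤ δ x) :
    quadForm P₁⁻¹ (closedLoop X₁ E D₀ G₁ G₂ Q d x)
      ≤ quadForm P₁⁻¹ (((X₁ - E * D₀) * G₁) *ᵥ x) + quadForm (P₁⁻¹ * Ω * P₁⁻¹) x
        + (ellFun X₁ E Δ P₁ Ω G₁ G₂ Q x + gFun X₁ E Δ P₁ G₁ G₂ Q (δ x) x) := by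
  have hsymm : P₁⁻¹.IsSymm := isHermitian_iff_isSymm.1 hP₁.inv.isHermitian
  rw [closedLoop, quadForm_add_right hsymm, quadForm_add_right hsymm]
  have hnonlinear : _ ≤ ellFun X₁ E Δ P₁ Ω G₁ G₂ Q x + _ := nonlinear_crossTerm_le hD₀ x
  have hdisturbance : _ ≤ gFun X₁ E Δ P₁ G₁ G₂ Q (δ x) x := disturbance_crossTerm_le hD₀ hd x
  linarith

lemma exists_quadForm_closedLoop_add_le {Y₁ : Matrix (Fin T) (Fin n) ℝ} (hP₁ : P₁.PosDef)
    (hrob : NegDef (Y₁ᵀ * (X₁ - E * D₀)ᵀ * P₁⁻¹ * ((X₁ - E * D₀) * Y₁) - P₁ + Ω))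
    (hD₀ : spec2Norm D₀ ≤ spec2Norm Δ) (hd : ∀ x, euclNorm (d x) ≤ δ x) :
    ∃ c > 0, ∀ x, quadForm P₁⁻¹ (closedLoop X₁ E D₀ (Y₁ * P₁⁻¹) G₂ Q d x) + c * euclNorm x ^ 2
      ≤ quadForm P₁⁻¹ x + (ellFun X₁ E Δ P₁ Ω (Y₁ * P₁⁻¹) G₂ Q x
        + gFun X₁ E Δ P₁ (Y₁ * P₁⁻¹) G₂ Q (δ x) x) := by
  obtain ⟨c, hc, hlin⟩ := exists_quadForm_decrease_of_negDef hP₁ hrob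
  refine ⟨c, hc, fun x => ?_⟩
  have hnext : quadForm P₁⁻¹ (closedLoop X₁ E D₀ (Y₁ * P₁⁻¹) G₂ Q d x)
      ≤ _ + quadForm (P₁⁻¹ * Ω * P₁⁻¹) x + _ := quadForm_closedLoop_le hP₁ hD₀ (hd x)
  linarith [hlin x]

variable {l : Filter (Fin n → ℝ)}

lemma isLittleO_ellFun_add_quadForm (hQ : Q =o[l] euclNorm) :
    (fun x => ellFun X₁ E Δ P₁ Ω G₁ G₂ Q x + quadForm (P₁⁻¹ * Ω * P₁⁻¹) x)
      =o[l] fun x => euclNorm x ^ 2 := by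
  have hNQ {κ : Type} [Fintype κ] (N : Matrix κ (Fin p) ℝ) : (fun x => N *ᵥ Q x) =o[l] euclNorm :=
    (isBigO_mulVec N Q).trans_isLittleO hQ
  have hlin {κ : Type} [Fintype κ] (M : Matrix κ (Fin n) ℝ) (N : Matrix κ (Fin p) ℝ) :
      (fun x => (2 : ℝ) • (M *ᵥ x) + N *ᵥ Q x) =O[l] euclNorm := by
    simpa only [smul_mulVec] using isBigO_mulVec_add_mulVec hQ.isBigO ((2 : ℝ) • M) N
  have hℓ₁ := isLittleO_dotProduct (hlin (X₁ * G₁) (X₁ * G₂))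
    ((isBigO_mulVec P₁⁻¹ _).trans_isLittleO (hNQ (X₁ * G₂)))
  have hℓ₂ := isLittleO_sq_of_isBigO_mul_isLittleO (spec2Norm Δ)
    (isBigO_euclNorm ((isBigO_vecMul (P₁⁻¹ * E) _).trans (hlin (X₁ * G₁) (X₁ * G₂))))
    (isLittleO_euclNorm (hNQ G₂))
  have hℓ₃ := isLittleO_sq_of_isBigO_mul_isLittleO (spec2Norm Δ)
    (isBigO_euclNorm (hlin G₁ G₂)) (isLittleO_euclNorm (hNQ (Eᵀ * P₁⁻¹ * X₁ * G₂)))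
  have hℓ₄ := isLittleO_sq_of_isBigO_mul_isLittleO (spec2Norm Δ ^ 2 * spec2Norm (Eᵀ * P₁⁻¹ * E))
    (isBigO_euclNorm (hlin G₁ G₂)) (isLittleO_euclNorm (hNQ G₂))
  refine (((hℓ₁.add hℓ₂).add hℓ₃).add hℓ₄).congr_left fun x => ?_
  simp only [ellFun, quadForm]
  ring

lemma isLittleO_gFun (hQ : Q =o[l] euclNorm) (hδ : δ =o[l] euclNorm) :
    (fun x => gFun X₁ E Δ P₁ G₁ G₂ Q (δ x) x) =o[l] fun x => euclNorm x ^ 2 := by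
  have hr₁ := isLittleO_sq_of_isBigO_mul_isLittleO 2 (isBigO_euclNorm <|
    (isBigO_vecMul (P₁⁻¹ * E) _).trans (isBigO_mulVec_add_mulVec hQ.isBigO (X₁ * G₁) (X₁ * G₂))) hδ
  have hr₂ := isLittleO_sq_of_isBigO_mul_isLittleO (2 * spec2Norm Δ * spec2Norm (Eᵀ * P₁⁻¹ * E))
    (isBigO_euclNorm (isBigO_mulVec_add_mulVec hQ.isBigO G₁ G₂)) hδ
  have hr₃ := isLittleO_sq_of_isBigO_mul_isLittleO (spec2Norm (Eᵀ * P₁⁻¹ * E)) hδ.isBigO hδ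
  refine ((hr₁.add hr₂).add hr₃).congr_left fun x => ?_
  rw [gFun]
  ring

lemma eventually_ellFun_add_gFun_le (hP₁ : P₁.PosDef) (hΩ : Ω.PosSemidef)
    (hQ : Q =o[l] euclNorm) (hδ : δ =o[l] euclNorm) {ε : ℝ} (hε : 0 < ε) :
    ∀ᶠ x in l, ellFun X₁ E Δ P₁ Ω G₁ G₂ Q x + gFun X₁ E Δ P₁ G₁ G₂ Q (δ x) x
      ≤ ε * euclNorm x ^ 2 := by
  have ho : (fun x => ellFun X₁ E Δ P₁ Ω G₁ G₂ Q x + quadForm (P₁⁻¹ * Ω * P₁⁻¹) x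
      + gFun X₁ E Δ P₁ G₁ G₂ Q (δ x) x) =o[l] fun x => euclNorm x ^ 2 :=
    (isLittleO_ellFun_add_quadForm hQ).add (isLittleO_gFun hQ hδ)
  filter_upwards [ho.bound hε] with x hx
  rw [Real.norm_of_nonneg (sq_nonneg (euclNorm x))] at hx
  linarith [(Real.le_norm_self _).trans hx,
    quadForm_nonneg (posSemidef_inv_mul_mul_inv hP₁ hΩ) x]

lemma closedLoop_zero (hQ₀ : Q 0 = 0) (hcont : ContinuousAt δ 0) (hδ : δ =o[𝓝[≠] 0] euclNorm)
    (hd : ∀ x, euclNorm (d x) ≤ δ x) : closedLoop X₁ E D₀ G₁ G₂ Q d 0 = 0 := by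
  cases subsingleton_or_nontrivial (Fin n → ℝ)
  · exact Subsingleton.elim _ _
  have hd₀ : d 0 = 0 := by
    refine euclNorm_eq_zero.1 (le_antisymm ?_ (euclNorm_nonneg _))
    exact (hd 0).trans_eq (eq_zero_of_isBigO_of_tendsto_zero hcont hδ.isBigO
      (tendsto_euclNorm_zero.mono_left nhdsWithin_le_nhds))
  simp [closedLoop, hQ₀, hd₀]

lemma exists_quadForm_closedLoop_contraction {Y₁ : Matrix (Fin T) (Fin n) ℝ} (hP₁ : P₁.PosDef)
    (hΩ : Ω.PosSemidef)
    (hrob : NegDef (Y₁ᵀ * (X₁ - E * D₀)ᵀ * P₁⁻¹ * ((X₁ - E * D₀) * Y₁) - P₁ + Ω))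
    (hD₀ : spec2Norm D₀ ≤ spec2Norm Δ) (hd : ∀ x, euclNorm (d x) ≤ δ x)
    (hQ : Q =o[𝓝[≠] 0] euclNorm) (hδ : δ =o[𝓝[≠] 0] euclNorm)
    (hzero : closedLoop X₁ E D₀ (Y₁ * P₁⁻¹) G₂ Q d 0 = 0) :
    ∃ ρ, 0 ≤ ρ ∧ ρ < 1 ∧
      (∀ x, ellFun X₁ E Δ P₁ Ω (Y₁ * P₁⁻¹) G₂ Q x + gFun X₁ E Δ P₁ (Y₁ * P₁⁻¹) G₂ Q (δ x) x ≤ 0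
          ∨ x = 0 →
        quadForm P₁⁻¹ (closedLoop X₁ E D₀ (Y₁ * P₁⁻¹) G₂ Q d x) ≤ ρ * quadForm P₁⁻¹ x) ∧
      ∀ᶠ x in 𝓝 0,
        quadForm P₁⁻¹ (closedLoop X₁ E D₀ (Y₁ * P₁⁻¹) G₂ Q d x) ≤ ρ * quadForm P₁⁻¹ x := by
  obtain ⟨c, hc, hdecr⟩ := exists_quadForm_closedLoop_add_le (G₂ := G₂) (Q := Q) hP₁ hrob hD₀ hd
  obtain ⟨ρ, hρ₀, hρ₁, hρ⟩ := exists_quadForm_contraction_factor P₁⁻¹ (half_pos hc)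
  have hle_of_le (x) (hx : ellFun X₁ E Δ P₁ Ω (Y₁ * P₁⁻¹) G₂ Q x
        + gFun X₁ E Δ P₁ (Y₁ * P₁⁻¹) G₂ Q (δ x) x ≤ c / 2 * euclNorm x ^ 2) :
      quadForm P₁⁻¹ (closedLoop X₁ E D₀ (Y₁ * P₁⁻¹) G₂ Q d x) ≤ ρ * quadForm P₁⁻¹ x :=
    hρ _ _ (by linarith [hdecr x])
  have hle_zero : quadForm P₁⁻¹ (closedLoop X₁ E D₀ (Y₁ * P₁⁻¹) G₂ Q d 0)
      ≤ ρ * quadForm P₁⁻¹ 0 := by simp [hzero]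
  refine ⟨ρ, hρ₀, hρ₁, fun x hx => ?_, ?_⟩
  · rcases hx with hx | rfl
    · exact hle_of_le x (hx.trans (by positivity))
    · exact hle_zero
  · rw [← nhdsNE_sup_pure, eventually_sup, eventually_pure]
    exact ⟨(eventually_ellFun_add_gFun_le hP₁ hΩ hQ hδ (half_pos hc)).mono hle_of_le, hle_zero⟩

end ClosedLoop

theorem asymptotic_stability_state_dependent_bound_general
    {n p s s' T : ℕ}
    (X₁ : Matrix (Fin n) (Fin T) ℝ) (E : Matrix (Fin n) (Fin s) ℝ)
    (D₀ : Matrix (Fin s) (Fin T) ℝ) (Δ : Matrix (Fin s) (Fin s') ℝ)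
    (Q : (Fin n → ℝ) → Fin p → ℝ)
    (hQ0 : Q 0 = 0)
    (hQlim : Tendsto (fun x : Fin n → ℝ => euclNorm (Q x) / euclNorm x)
      (𝓝[≠] 0) (𝓝 0))
    (d : (Fin n → ℝ) → Fin s → ℝ)
    (δfun : (Fin n → ℝ) → ℝ) (hδcont : ContinuousAt δfun 0)
    (hδlim : Tendsto (fun x : Fin n → ℝ => δfun x / euclNorm x)
      (𝓝[≠] 0) (𝓝 0))
    (hd : ∀ x, euclNorm (d x) ≤ δfun x)
    (hD₀norm : spec2Norm D₀ ≤ spec2Norm Δ)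
    (P₁ : Matrix (Fin n) (Fin n) ℝ) (hP₁ : P₁.PosDef)
    (Ω : Matrix (Fin n) (Fin n) ℝ) (hΩ : Ω.PosSemidef)
    (Y₁ : Matrix (Fin T) (Fin n) ℝ) (G₂ : Matrix (Fin T) (Fin p) ℝ)
    (hrob : NegDef (Y₁ᵀ * (X₁ - E * D₀)ᵀ * P₁⁻¹ * ((X₁ - E * D₀) * Y₁) - P₁ + Ω))
    (G₁ : Matrix (Fin T) (Fin n) ℝ) (hG₁ : G₁ = Y₁ * P₁⁻¹)
    (Ψ : Matrix (Fin n) (Fin n) ℝ) (hΨ : Ψ = (X₁ - E * D₀) * G₁)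
    (Ξ : Matrix (Fin n) (Fin p) ℝ) (hΞ : Ξ = (X₁ - E * D₀) * G₂)
    (V : (Fin n → ℝ) → ℝ) (hV : ∀ x, V x = x ⬝ᵥ (P₁⁻¹ *ᵥ x))
    (f : (Fin n → ℝ) → Fin n → ℝ)
    (hf : ∀ x, f x = Ψ *ᵥ x + Ξ *ᵥ Q x + E *ᵥ d x) :
    f 0 = 0 ∧
    (∀ ε > (0:ℝ), ∃ δ > (0:ℝ), ∀ x : ℕ → Fin n → ℝ,
      (∀ t, x (t + 1) = f (x t)) → euclNorm (x 0) ≤ δ →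
      ∀ t, euclNorm (x t) ≤ ε) ∧
    (∃ r > (0:ℝ), ∀ x : ℕ → Fin n → ℝ,
      (∀ t, x (t + 1) = f (x t)) → euclNorm (x 0) ≤ r →
      Tendsto x atTop (𝓝 0)) ∧
    (∀ γ : ℝ,
      (∀ x : Fin n → ℝ, V x ≤ γ →
        ellFun X₁ E Δ P₁ Ω G₁ G₂ Q x
          + gFun X₁ E Δ P₁ G₁ G₂ Q (δfun x) x ≤ 0 ∨ x = 0) →
      ∀ x : ℕ → Fin n → ℝ, (∀ t, x (t + 1) = f (x t)) → V (x 0) ≤ γ →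
        (∀ t, V (x t) ≤ γ) ∧ Tendsto x atTop (𝓝 0)) := by
  have hQ : Q =o[𝓝[≠] 0] euclNorm :=
    (isTheta_euclNorm Q).isBigO_symm.trans_isLittleO (isLittleO_euclNorm_of_tendsto_div hQlim)
  have hδ : δfun =o[𝓝[≠] 0] euclNorm := isLittleO_euclNorm_of_tendsto_div hδlim
  obtain rfl : V = quadForm P₁⁻¹ := funext hV
  obtain rfl : f = closedLoop X₁ E D₀ G₁ G₂ Q d := funext fun x => by rw [hf, hΨ, hΞ, closedLoop]
  subst hG₁
  have hzero : closedLoop X₁ E D₀ (Y₁ * P₁⁻¹) G₂ Q d 0 = 0 := closedLoop_zero hQ0 hδcont hδ hd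
  obtain ⟨ρ, hρ₀, hρ₁, hW, hnear⟩ := exists_quadForm_closedLoop_contraction hP₁ hΩ hrob
    hD₀norm hd hQ hδ hzero
  have hbasis := nhds_zero_basis_quadForm hP₁.inv
  have hV₀ := quadForm_nonneg hP₁.inv.posSemidef
  have hstable {U : Set (Fin n → ℝ)} (hU : U ∈ 𝓝 0) := nhds_zero_basis_euclNorm.eventually_iff.1 <|
    eventually_iterate_mem_and_tendsto_of_contraction hbasis hV₀ hρ₀ hρ₁ hnear hU
  refine ⟨hzero, fun ε hε => ?_, ?_, fun γ hγ x hx hx₀ => ?_⟩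
  · obtain ⟨η, hη, hmem⟩ := hstable (nhds_zero_basis_euclNorm.mem_of_mem hε)
    exact ⟨η, hη, fun x hx hx₀ t => eq_iterate_of_forall_succ hx t ▸ (hmem hx₀).1 t⟩
  · obtain ⟨r, hr, hmem⟩ := hstable univ_mem
    exact ⟨r, hr, fun x hx hx₀ => funext (eq_iterate_of_forall_succ hx) ▸ (hmem hx₀).2⟩
  · have hcontr := fun y hy => hW y (hγ y hy)
    rw [funext (eq_iterate_of_forall_succ hx)]
    exact ⟨fun t => (mapsTo_sublevel_of_contraction hV₀ hρ₁.le hcontr).iterate t hx₀,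
      tendsto_iterate_of_contraction hbasis hV₀ hρ₀ hρ₁ hcontr hx₀⟩

/-- Theorem 9 (asymptotic stability under state-dependent disturbance bounds). -/
theorem asymptotic_stability_state_dependent_bound
    {n p s s' T : ℕ}
    (X₁ : Matrix (Fin n) (Fin T) ℝ) (E : Matrix (Fin n) (Fin s) ℝ)
    (D₀ : Matrix (Fin s) (Fin T) ℝ) (Δ : Matrix (Fin s) (Fin s') ℝ)
    (Q : (Fin n → ℝ) → Fin p → ℝ)
    (hQ0 : Q 0 = 0)
    (hQlim : Filter.Tendsto (fun x : Fin n → ℝ => euclNorm (Q x) / euclNorm x)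
      (nhdsWithin 0 {x | x ≠ 0}) (nhds 0))
    -- the neglected nonlinearity and its state-dependent bound:
    (d : (Fin n → ℝ) → Fin s → ℝ)
    (δfun : (Fin n → ℝ) → ℝ) (hδcont : Continuous δfun)
    (hδnonneg : ∀ x, 0 ≤ δfun x)
    (hδlim : Filter.Tendsto (fun x : Fin n → ℝ => δfun x / euclNorm x)
      (nhdsWithin 0 {x | x ≠ 0}) (nhds 0))
    (hd : ∀ x, euclNorm (d x) ≤ δfun x)
    (hD₀norm : spec2Norm D₀ ≤ spec2Norm Δ)
    (P₁ : Matrix (Fin n) (Fin n) ℝ) (hP₁symm : P₁.IsSymm) (hP₁ : P₁.PosDef)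
    (Ω : Matrix (Fin n) (Fin n) ℝ) (hΩsymm : Ω.IsSymm) (hΩ : Ω.PosDef)
    (Y₁ : Matrix (Fin T) (Fin n) ℝ) (G₂ : Matrix (Fin T) (Fin p) ℝ)
    (hrob : NegDef (Y₁ᵀ * (X₁ - E * D₀)ᵀ * P₁⁻¹ * ((X₁ - E * D₀) * Y₁) - P₁ + Ω))
    (G₁ : Matrix (Fin T) (Fin n) ℝ) (hG₁ : G₁ = Y₁ * P₁⁻¹)
    (Ψ : Matrix (Fin n) (Fin n) ℝ) (hΨ : Ψ = (X₁ - E * D₀) * G₁)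
    (Ξ : Matrix (Fin n) (Fin p) ℝ) (hΞ : Ξ = (X₁ - E * D₀) * G₂)
    (V : (Fin n → ℝ) → ℝ) (hV : ∀ x, V x = x ⬝ᵥ (P₁⁻¹ *ᵥ x))
    -- the closed-loop map:
    (f : (Fin n → ℝ) → Fin n → ℝ)
    (hf : ∀ x, f x = Ψ *ᵥ x + Ξ *ᵥ Q x + E *ᵥ d x) :
    -- the origin is an asymptotically stable equilibrium:
    f 0 = 0 ∧
    (∀ ε > (0:ℝ), ∃ δ > (0:ℝ), ∀ x : ℕ → Fin n → ℝ,
      (∀ t, x (t + 1) = f (x t)) → euclNorm (x 0) ≤ δ →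
      ∀ t, euclNorm (x t) ≤ ε) ∧
    (∃ r > (0:ℝ), ∀ x : ℕ → Fin n → ℝ,
      (∀ t, x (t + 1) = f (x t)) → euclNorm (x 0) ≤ r →
      Filter.Tendsto x Filter.atTop (nhds 0)) ∧
    -- every sublevel set ℛ_γ ⊆ 𝒲 ∪ {0} is positively invariant with
    -- all solutions starting in it converging to 0:
    (∀ γ : ℝ, 0 < γ →
      (∀ x : Fin n → ℝ, V x ≤ γ →
        ellFun X₁ E Δ P₁ Ω G₁ G₂ Q x
          + gFun X₁ E Δ P₁ G₁ G₂ Q (δfun x) x < 0 ∨ x = 0) →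
      ∀ x : ℕ → Fin n → ℝ, (∀ t, x (t + 1) = f (x t)) → V (x 0) ≤ γ →
        (∀ t, V (x t) ≤ γ) ∧ Filter.Tendsto x Filter.atTop (nhds 0)) := by
  obtain ⟨hzero, hstable, hattr, hsub⟩ := asymptotic_stability_state_dependent_bound_general X₁ E D₀
    Δ Q hQ0 hQlim d δfun hδcont.continuousAt hδlim hd hD₀norm P₁ hP₁ Ω hΩ.posSemidef Y₁ G₂ hrob G₁
    hG₁ Ψ hΨ Ξ hΞ V hV f hf
  exact ⟨hzero, hstable, hattr, fun γ _ hγ =>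
    hsub γ fun x hx => (hγ x hx).imp_left le_of_lt⟩
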